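/- arXiv:0709.0213 — 2 statements merged into one kernel-verified Lean document; each statement's English description precedes it below -/
import Mathlib

section
/- (van der Corput decay for arc-length measure on a curve with nonvanishing curvature) Let γ : [0,l] → ℝ² be a C² arclength-parametrized curve with |x'(t)y''(t) - x''(t)y'(t)| ≥ c > 0 for all t, where γ = (x,y). Then the Fourier transform ν̂(p) = (1/2π)∫₀^l e^{-i⟨p,γ(t)⟩} dt of the measure δ_Γ tends to 0 as |p| → ∞. -/
open MeasureTheory Real Filter Set

open scoped Topology
open Bornology (cobounded eventually_ne_cobounded)

/-!
Write `e^{iψ} = ψ' R(ψ') e^{iψ} + W(ψ') e^{iψ}`, where `R(u) = u / (u² + K)` is a regularized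
reciprocal and `W(u) = K / (u² + K)`. Integrating the first term by parts and choosing `K` to be a
bound for `|ψ''|` gives `|∫ e^{iψ}| ≤ 1 / √K + 2 ∫ W(ψ')`, with no case distinction between
stationary and non-stationary pieces.

For the phases `ψ = ⟨p, γ⟩` one may take `K = M‖p‖`, and then `W(ψ')` depends only on `M / ‖p‖` and
on the derivative of the phase in the direction `p / ‖p‖`. The latter vanishes only on a null set,
because nonvanishing curvature makes its zeros simple, hence isolated. So `∫ W(ψ')` tends to `0` by
dominated convergence, uniformly over the compact sphere of directions.
-/

section RegularizedReciprocal

variable {K : ℝ}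

/-- The bounded substitute `u / (u² + K)` for the reciprocal `1 / u`, by which one divides a phase
derivative `u` that may vanish. -/
noncomputable def regularizedInv (K u : ℝ) : ℝ := u / (u ^ 2 + K)

/-- The defect `K / (u² + K)` of `regularizedInv K u` as an inverse of `u`. It is concentrated on
`|u| ≲ √K`, so that for a phase derivative `u` it singles out the nearly stationary points. -/
noncomputable def stationaryWeight (K u : ℝ) : ℝ := K / (u ^ 2 + K)

lemma mul_regularizedInv (hK : 0 < K) (u : ℝ) :
    u * regularizedInv K u = 1 - stationaryWeight K u := by
  have : u ^ 2 + K ≠ 0 := by positivity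
  unfold regularizedInv stationaryWeight
  field_simp
  ring

lemma abs_regularizedInv_le (hK : 0 < K) (u : ℝ) : |regularizedInv K u| ≤ 1 / (2 * √K) := by
  have hpos : 0 < u ^ 2 + K := by positivity
  rw [regularizedInv, abs_div, abs_of_pos hpos, div_le_div_iff₀ hpos (by positivity)]
  nlinarith [sq_nonneg (|u| - √K), sq_abs u, sq_sqrt hK.le]

lemma hasDerivAt_regularizedInv (hK : 0 < K) (u : ℝ) :
    HasDerivAt (regularizedInv K) ((K - u ^ 2) / (u ^ 2 + K) ^ 2) u := by
  have hne : u ^ 2 + K ≠ 0 := by positivity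
  refine ((hasDerivAt_id u).fun_div ((hasDerivAt_pow 2 u).add_const K) hne).congr_deriv ?_
  simp only [id]
  ring

lemma stationaryWeight_nonneg (hK : 0 ≤ K) (u : ℝ) : 0 ≤ stationaryWeight K u := by
  unfold stationaryWeight; positivity

lemma stationaryWeight_le_one (hK : 0 ≤ K) (u : ℝ) : stationaryWeight K u ≤ 1 :=
  div_le_one_of_le₀ (by linarith [sq_nonneg u]) (by positivity)

lemma continuous_stationaryWeight (hK : 0 < K) : Continuous (stationaryWeight K) :=
  continuous_const.div (by fun_prop) fun u => by positivity

lemma stationaryWeight_mul {r : ℝ} (hr : r ≠ 0) (K u : ℝ) :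
    stationaryWeight K (r * u) = stationaryWeight (K / r ^ 2) u := by
  unfold stationaryWeight
  rw [show (r * u) ^ 2 + K = r ^ 2 * (u ^ 2 + K / r ^ 2) by field_simp, ← div_div]

lemma tendsto_stationaryWeight_zero {u : ℝ} (hu : u ≠ 0) :
    Tendsto (fun z : ℝ × ℝ => stationaryWeight z.1 z.2) (𝓝 (0, u)) (𝓝 0) := by
  have hcont : ContinuousAt (fun z : ℝ × ℝ => z.1 / (z.2 ^ 2 + z.1)) (0, u) :=
    ContinuousAt.div (by fun_prop) (by fun_prop) (by simpa using hu)
  simpa [stationaryWeight] using hcont.tendsto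

lemma abs_deriv_regularizedInv_mul_le (hK : 0 < K) (u : ℝ) {v : ℝ} (hv : |v| ≤ K) :
    |(K - u ^ 2) / (u ^ 2 + K) ^ 2 * v| ≤ stationaryWeight K u := by
  have hpos : 0 < u ^ 2 + K := by positivity
  have hnum : |K - u ^ 2| ≤ u ^ 2 + K :=
    abs_le.2 ⟨by linarith [sq_nonneg u], by linarith [sq_nonneg u]⟩
  calc |(K - u ^ 2) / (u ^ 2 + K) ^ 2 * v|
      = |K - u ^ 2| / (u ^ 2 + K) ^ 2 * |v| := by
        rw [abs_mul, abs_div, abs_of_pos (pow_pos hpos 2)]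
    _ ≤ (u ^ 2 + K) / (u ^ 2 + K) ^ 2 * K := by gcongr
    _ = stationaryWeight K u := by unfold stationaryWeight; field_simp

end RegularizedReciprocal

section OscillatoryIntegral

variable {ψ ψ' ψ'' : ℝ → ℝ} {a b K : ℝ}

/-- The boundary term of the regularized integration by parts: an approximate primitive of
`e^{iψ}`, where `ψ'` stands for the derivative of `ψ`. -/
noncomputable def approxPrimitive (K : ℝ) (ψ ψ' : ℝ → ℝ) (t : ℝ) : ℂ :=
  -Complex.I * regularizedInv K (ψ' t) * Complex.exp (ψ t * Complex.I)

/-- The difference between `e^{iψ}` and the derivative of `approxPrimitive K ψ ψ'`, where `ψ'` and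
`ψ''` stand for the derivatives of `ψ`. -/
noncomputable def approxPrimitiveError (K : ℝ) (ψ ψ' ψ'' : ℝ → ℝ) (t : ℝ) : ℂ :=
  (stationaryWeight K (ψ' t) +
    ((K - ψ' t ^ 2) / (ψ' t ^ 2 + K) ^ 2 * ψ'' t : ℝ) * Complex.I) *
      Complex.exp (ψ t * Complex.I)

lemma norm_approxPrimitive_le (hK : 0 < K) (t : ℝ) :
    ‖approxPrimitive K ψ ψ' t‖ ≤ 1 / (2 * √K) := by
  simpa [approxPrimitive, Complex.norm_exp_ofReal_mul_I] using abs_regularizedInv_le hK (ψ' t)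

lemma norm_approxPrimitiveError_le (hK : 0 < K) {t : ℝ} (hψ'' : |ψ'' t| ≤ K) :
    ‖approxPrimitiveError K ψ ψ' ψ'' t‖ ≤ 2 * stationaryWeight K (ψ' t) := by
  rw [approxPrimitiveError, norm_mul, Complex.norm_exp_ofReal_mul_I, mul_one, two_mul]
  refine norm_add_le_of_le ?_ ?_
  · rw [Complex.norm_real, Real.norm_of_nonneg (stationaryWeight_nonneg hK.le _)]
  · rw [norm_mul, Complex.norm_I, mul_one, Complex.norm_real]
    exact abs_deriv_regularizedInv_mul_le hK _ hψ''

lemma hasDerivWithinAt_approxPrimitive (hK : 0 < K) {s : Set ℝ} {t : ℝ}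
    (hψ : HasDerivWithinAt ψ (ψ' t) s t) (hψ' : HasDerivWithinAt ψ' (ψ'' t) s t) :
    HasDerivWithinAt (approxPrimitive K ψ ψ')
      (Complex.exp (ψ t * Complex.I) - approxPrimitiveError K ψ ψ' ψ'' t) s t := by
  have hinv := ((hasDerivAt_regularizedInv hK (ψ' t)).comp_hasDerivWithinAt t hψ').ofReal_comp
  have hexp := (hψ.ofReal_comp.mul_const Complex.I).cexp
  refine ((hinv.const_mul (-Complex.I)).mul hexp).congr_deriv ?_
  have hmul : (ψ' t : ℂ) * regularizedInv K (ψ' t) = 1 - stationaryWeight K (ψ' t) :=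
    mod_cast mul_regularizedInv hK (ψ' t)
  simp only [approxPrimitiveError, Function.comp_apply]
  linear_combination Complex.exp (ψ t * Complex.I) *
    (hmul - regularizedInv K (ψ' t) * ψ' t * Complex.I_sq)

lemma continuousOn_approxPrimitiveError (hK : 0 < K) {s : Set ℝ} (hψ : ContinuousOn ψ s)
    (hψ' : ContinuousOn ψ' s) (hψ'' : ContinuousOn ψ'' s) :
    ContinuousOn (approxPrimitiveError K ψ ψ' ψ'') s := by
  have hweight := (continuous_stationaryWeight hK).comp_continuousOn hψ'
  have hderiv : ContinuousOn (fun t => (K - ψ' t ^ 2) / (ψ' t ^ 2 + K) ^ 2 * ψ'' t) s :=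
    (ContinuousOn.div (by fun_prop) (by fun_prop) fun t _ => by positivity).mul hψ''
  exact (((Complex.continuous_ofReal.comp_continuousOn hweight).add
    ((Complex.continuous_ofReal.comp_continuousOn hderiv).mul_const _)).mul (by fun_prop))

theorem norm_integral_cexp_le_stationaryWeight (hab : a ≤ b) (hK : 0 < K)
    (hψ : ∀ t ∈ Icc a b, HasDerivWithinAt ψ (ψ' t) (Icc a b) t)
    (hψ' : ∀ t ∈ Icc a b, HasDerivWithinAt ψ' (ψ'' t) (Icc a b) t)
    (hψ'' : ContinuousOn ψ'' (Icc a b)) (hbound : ∀ t ∈ Icc a b, |ψ'' t| ≤ K) :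
    ‖∫ t in a..b, Complex.exp (ψ t * Complex.I)‖ ≤
      1 / √K + 2 * ∫ t in a..b, stationaryWeight K (ψ' t) := by
  have hψc : ContinuousOn ψ (Icc a b) := fun t ht => (hψ t ht).continuousWithinAt
  have hψ'c : ContinuousOn ψ' (Icc a b) := fun t ht => (hψ' t ht).continuousWithinAt
  have hexpInt : IntervalIntegrable (fun t => Complex.exp (ψ t * Complex.I)) volume a b :=
    ContinuousOn.intervalIntegrable_of_Icc hab (by fun_prop)
  have herrorInt : IntervalIntegrable (approxPrimitiveError K ψ ψ' ψ'') volume a b :=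
    (continuousOn_approxPrimitiveError hK hψc hψ'c hψ'').intervalIntegrable_of_Icc hab
  have hweightInt : IntervalIntegrable (fun t => 2 * stationaryWeight K (ψ' t)) volume a b :=
    (((continuous_stationaryWeight hK).comp_continuousOn hψ'c).const_mul
      2).intervalIntegrable_of_Icc hab
  have hprim := fun t ht => hasDerivWithinAt_approxPrimitive hK (hψ t ht) (hψ' t ht)
  have hparts : ∫ t in a..b, Complex.exp (ψ t * Complex.I) =
      approxPrimitive K ψ ψ' b - approxPrimitive K ψ ψ' a +
        ∫ t in a..b, approxPrimitiveError K ψ ψ' ψ'' t := by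
    rw [← sub_eq_iff_eq_add, ← intervalIntegral.integral_sub hexpInt herrorInt]
    exact intervalIntegral.integral_eq_sub_of_hasDerivAt_of_le hab
      (fun t ht => (hprim t ht).continuousWithinAt)
      (fun t ht => (hprim t (Ioo_subset_Icc_self ht)).hasDerivAt (Icc_mem_nhds ht.1 ht.2))
      (hexpInt.sub herrorInt)
  have hboundary : ‖approxPrimitive K ψ ψ' b - approxPrimitive K ψ ψ' a‖ ≤ 1 / √K :=
    (norm_sub_le_of_le (norm_approxPrimitive_le hK b) (norm_approxPrimitive_le hK a)).trans_eq
      (by field_simp; norm_num)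
  have herror : ‖∫ t in a..b, approxPrimitiveError K ψ ψ' ψ'' t‖ ≤
      2 * ∫ t in a..b, stationaryWeight K (ψ' t) := by
    rw [← intervalIntegral.integral_const_mul]
    exact intervalIntegral.norm_integral_le_of_norm_le hab (.of_forall fun t ht =>
      norm_approxPrimitiveError_le hK (hbound t (Ioc_subset_Icc_self ht))) hweightInt
  rw [hparts]
  exact norm_add_le_of_le hboundary herror

end OscillatoryIntegral

section UniformityInDirection

variable {α V : Type*} [MeasurableSpace α] {μ : Measure α} [IsFiniteMeasure μ]
  [NormedAddCommGroup V] [NormedSpace ℝ V] {L : α → StrongDual ℝ V}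

lemma tendsto_integral_stationaryWeight_nhds (hL : AEStronglyMeasurable L μ) {ω : V}
    (hω : ∀ᵐ t ∂μ, L t ω ≠ 0) :
    Tendsto (fun z : ℝ × V => ∫ t, stationaryWeight z.1 (L t z.2) ∂μ) (𝓝[>] 0 ×ˢ 𝓝 ω) (𝓝 0) := by
  have hpos : ∀ᶠ z : ℝ × V in 𝓝[>] 0 ×ˢ 𝓝 ω, 0 < z.1 :=
    tendsto_fst.eventually self_mem_nhdsWithin
  suffices Tendsto (fun z : ℝ × V => ∫ t, stationaryWeight z.1 (L t z.2) ∂μ) (𝓝[>] 0 ×ˢ 𝓝 ω)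
      (𝓝 (∫ _, 0 ∂μ)) by simpa only [integral_zero] using this
  refine tendsto_integral_filter_of_dominated_convergence (fun _ => 1) ?_ ?_
    (integrable_const 1) ?_
  · filter_upwards [hpos] with z hz
    exact (continuous_stationaryWeight hz).comp_aestronglyMeasurable
      (hL.apply_continuousLinearMap z.2)
  · filter_upwards [hpos] with z hz
    refine .of_forall fun t => ?_
    rw [Real.norm_of_nonneg (stationaryWeight_nonneg hz.le _)]
    exact stationaryWeight_le_one hz.le _
  · filter_upwards [hω] with t ht
    have harg : Tendsto (fun z : ℝ × V => (z.1, L t z.2)) (𝓝[>] 0 ×ˢ 𝓝 ω) (𝓝 (0, L t ω)) :=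
      (tendsto_fst.mono_right nhdsWithin_le_nhds).prodMk_nhds
        ((L t).continuous.continuousAt.tendsto.comp tendsto_snd)
    exact (tendsto_stationaryWeight_zero ht).comp harg

theorem tendsto_integral_stationaryWeight_cobounded [FiniteDimensional ℝ V] {M : ℝ} (hM : 0 < M)
    (hL : AEStronglyMeasurable L μ) (hω : ∀ ω : V, ω ≠ 0 → ∀ᵐ t ∂μ, L t ω ≠ 0) :
    Tendsto (fun p : V => ∫ t, stationaryWeight (M * ‖p‖) (L t p) ∂μ) (cobounded V) (𝓝 0) := by
  have : ProperSpace V := FiniteDimensional.proper_real V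
  have huniform : Tendsto (fun z : ℝ × V => ∫ t, stationaryWeight z.1 (L t z.2) ∂μ)
      (𝓝[>] 0 ×ˢ 𝓝ˢ (Metric.sphere 0 1)) (𝓝 0) := by
    rw [(isCompact_sphere (0 : V) 1).prod_nhdsSet_eq_biSup]
    simp only [tendsto_iSup]
    exact fun ω h => tendsto_integral_stationaryWeight_nhds hL
      (hω ω (ne_zero_of_mem_unit_sphere ⟨ω, h⟩))
  have hscale : Tendsto (fun p : V => M / ‖p‖) (cobounded V) (𝓝[>] 0) := by
    refine tendsto_nhdsWithin_iff.2 ⟨tendsto_norm_cobounded_atTop.const_div_atTop M, ?_⟩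
    filter_upwards [eventually_ne_cobounded 0] with p hp
    exact div_pos hM (norm_pos_iff.2 hp)
  have hdir : Tendsto (fun p : V => ‖p‖⁻¹ • p) (cobounded V) (𝓝ˢ (Metric.sphere 0 1)) := by
    refine (tendsto_principal.2 ?_).mono_right principal_le_nhdsSet
    filter_upwards [eventually_ne_cobounded 0] with p hp
    simpa using norm_smul_inv_norm (𝕜 := ℝ) hp
  refine (huniform.comp (hscale.prodMk hdir)).congr' ?_
  filter_upwards [eventually_ne_cobounded 0] with p hp
  have hp' : ‖p‖ ≠ 0 := norm_ne_zero_iff.2 hp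
  refine integral_congr_ae (.of_forall fun t => ?_)
  have hLp : L t p = ‖p‖ * L t (‖p‖⁻¹ • p) := by simp [hp']
  change stationaryWeight (M / ‖p‖) (L t (‖p‖⁻¹ • p)) = stationaryWeight (M * ‖p‖) (L t p)
  rw [hLp, stationaryWeight_mul hp']
  congr 1
  field_simp

end UniformityInDirection

section Curves

lemma countable_setOf_eq_of_hasDerivWithinAt_ne_zero {E : Type*} [NormedAddCommGroup E]
    [NormedSpace ℝ E] {f f' : ℝ → E} {s : Set ℝ}
    (hf : ∀ t ∈ s, HasDerivWithinAt f (f' t) s t) (c : E) :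
    {t ∈ s | f t = c ∧ f' t ≠ 0}.Countable := by
  set Z := {t ∈ s | f t = c ∧ f' t ≠ 0}
  refine (HereditarilyLindelofSpace.isLindelof Z).countable_of_isDiscrete
    (isDiscrete_iff_nhdsNE.2 fun t ht => ?_)
  have hsub : {t}ᶜ ∩ Z ⊆ s \ {t} := fun z hz => ⟨hz.2.1, hz.1⟩
  have hne : ∀ᶠ z in 𝓝[{t}ᶜ ∩ Z] t, f z ≠ c :=
    ((hf t ht.1).eventually_ne ht.2.2).filter_mono (nhdsWithin_mono t hsub)
  rw [← nhdsWithin_inter', ← eventually_false_iff_eq_bot]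
  filter_upwards [hne, self_mem_nhdsWithin] with z hfz hz using hfz hz.2.2.1

lemma ae_ne_of_hasDerivWithinAt_ne_zero {E : Type*} [NormedAddCommGroup E] [NormedSpace ℝ E]
    {μ : Measure ℝ} [NullSingletonClass μ] {f f' : ℝ → E} {s : Set ℝ} {c : E}
    (hf : ∀ t ∈ s, HasDerivWithinAt f (f' t) s t)
    (hf' : ∀ᵐ t ∂μ, t ∈ s → f t = c → f' t ≠ 0) :
    ∀ᵐ t ∂μ, t ∈ s → f t ≠ c := by
  have hcountable := countable_setOf_eq_of_hasDerivWithinAt_ne_zero hf c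
  filter_upwards [hf', hcountable.ae_notMem μ] with t hft hnotMem hts hfc
  exact hnotMem ⟨hts, hfc, hft hts hfc⟩

lemma hasDerivWithinAt_dual_apply {V : Type*} [NormedAddCommGroup V] [NormedSpace ℝ V]
    {Γ : ℝ → StrongDual ℝ V} {Γ' : StrongDual ℝ V} {s : Set ℝ} {t : ℝ}
    (hΓ : HasDerivWithinAt Γ Γ' s t) (p : V) : HasDerivWithinAt (fun t => Γ t p) (Γ' p) s t := by
  simpa using hΓ.clm_apply (hasDerivWithinAt_const t s p)

theorem tendsto_integral_cexp_dual_curve_cobounded {V : Type*} [NormedAddCommGroup V]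
    [NormedSpace ℝ V] [FiniteDimensional ℝ V] {a b : ℝ} (hab : a ≤ b)
    {Γ Γ' Γ'' : ℝ → StrongDual ℝ V}
    (hΓ : ∀ t ∈ Icc a b, HasDerivWithinAt Γ (Γ' t) (Icc a b) t)
    (hΓ' : ∀ t ∈ Icc a b, HasDerivWithinAt Γ' (Γ'' t) (Icc a b) t)
    (hΓ'' : ContinuousOn Γ'' (Icc a b))
    (hne : ∀ p : V, p ≠ 0 → ∀ᵐ t, t ∈ Icc a b → Γ' t p ≠ 0) :
    Tendsto (fun p : V => ∫ t in a..b, Complex.exp (Γ t p * Complex.I))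
      (cobounded V) (𝓝 0) := by
  obtain ⟨C, hC⟩ := isCompact_Icc.exists_bound_of_continuousOn hΓ''
  obtain ⟨M, hCM, hM⟩ : ∃ M, C ≤ M ∧ 0 < M := ⟨max C 1, le_max_left _ _, by positivity⟩
  have hΓ'c : ContinuousOn Γ' (Icc a b) := fun t ht => (hΓ' t ht).continuousWithinAt
  have hbound : ∀ p : V, p ≠ 0 → ‖∫ t in a..b, Complex.exp (Γ t p * Complex.I)‖ ≤
      1 / √(M * ‖p‖) + 2 * ∫ t in a..b, stationaryWeight (M * ‖p‖) (Γ' t p) := fun p hp =>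
    norm_integral_cexp_le_stationaryWeight hab (by positivity)
      (fun t ht => hasDerivWithinAt_dual_apply (hΓ t ht) p)
      (fun t ht => hasDerivWithinAt_dual_apply (hΓ' t ht) p)
      (hΓ''.clm_apply continuousOn_const)
      (fun t ht => (Γ'' t).le_of_opNorm_le ((hC t ht).trans hCM) p)
  have hboundary : Tendsto (fun p : V => 1 / √(M * ‖p‖)) (cobounded V) (𝓝 0) :=
    (tendsto_sqrt_atTop.comp
      (tendsto_norm_cobounded_atTop.const_mul_atTop hM)).const_div_atTop 1
  have hweight : Tendsto (fun p : V => ∫ t in a..b, stationaryWeight (M * ‖p‖) (Γ' t p))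
      (cobounded V) (𝓝 0) := by
    simp only [intervalIntegral.integral_of_le hab]
    refine tendsto_integral_stationaryWeight_cobounded hM
      ((hΓ'c.mono Ioc_subset_Icc_self).aestronglyMeasurable measurableSet_Ioc) fun p hp => ?_
    filter_upwards [ae_restrict_of_ae (hne p hp), ae_restrict_mem measurableSet_Ioc] with t ht hmem
    exact ht (Ioc_subset_Icc_self hmem)
  have hsum := hboundary.add (hweight.const_mul 2)
  rw [mul_zero, add_zero] at hsum
  refine squeeze_zero_norm' ?_ hsum
  filter_upwards [eventually_ne_cobounded 0] with p hp using hbound p hp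

/-- The linear functional `p ↦ p₁ u + p₂ v` on the frequency plane that a point `(u, v)` of the
physical plane defines; it turns a plane curve into a curve of functionals of the frequency. -/
noncomputable def planePairing (u v : ℝ) : StrongDual ℝ (ℝ × ℝ) :=
  u • ContinuousLinearMap.fst ℝ ℝ ℝ + v • ContinuousLinearMap.snd ℝ ℝ ℝ

@[simp]
lemma planePairing_apply (u v : ℝ) (p : ℝ × ℝ) : planePairing u v p = p.1 * u + p.2 * v := by
  simp [planePairing, mul_comm]

lemma hasDerivWithinAt_planePairing {x y : ℝ → ℝ} {x' y' t : ℝ} {s : Set ℝ}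
    (hx : HasDerivWithinAt x x' s t) (hy : HasDerivWithinAt y y' s t) :
    HasDerivWithinAt (fun t => planePairing (x t) (y t)) (planePairing x' y') s t :=
  (hx.smul_const (ContinuousLinearMap.fst ℝ ℝ ℝ)).add
    (hy.smul_const (ContinuousLinearMap.snd ℝ ℝ ℝ))

lemma continuousOn_planePairing {x y : ℝ → ℝ} {s : Set ℝ} (hx : ContinuousOn x s)
    (hy : ContinuousOn y s) : ContinuousOn (fun t => planePairing (x t) (y t)) s :=
  (hx.smul continuousOn_const).add (hy.smul continuousOn_const)

lemma planePairing_ne_zero_of_eq_zero {u v u' v' : ℝ} (hdet : u * v' - u' * v ≠ 0) {p : ℝ × ℝ}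
    (hp : p ≠ 0) (h : planePairing u v p = 0) : planePairing u' v' p ≠ 0 := by
  intro h'
  rw [planePairing_apply] at h h'
  refine hp (Prod.ext ?_ ?_) <;> refine (mul_eq_zero.1 ?_).resolve_right hdet
  · linear_combination v' * h - v * h'
  · linear_combination u * h' - u' * h

theorem fourier_decay_of_curved_arc_general {a b : ℝ} (hab : a < b) {x y : ℝ → ℝ}
    (hx : ContDiffOn ℝ 2 x (Icc a b)) (hy : ContDiffOn ℝ 2 y (Icc a b))
    (hcurv : ∀ᵐ t, t ∈ Icc a b →
      derivWithin x (Icc a b) t * derivWithin (derivWithin y (Icc a b)) (Icc a b) t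
        - derivWithin (derivWithin x (Icc a b)) (Icc a b) t * derivWithin y (Icc a b) t ≠ 0) :
    Tendsto (fun p : ℝ × ℝ => ∫ t in a..b,
        Complex.exp (-(Complex.I * ((p.1 * x t + p.2 * y t : ℝ) : ℂ))))
      (cobounded (ℝ × ℝ)) (𝓝 0) := by
  have hU : UniqueDiffOn ℝ (Icc a b) := uniqueDiffOn_Icc hab
  have hx' := hx.derivWithin (m := 1) hU (by norm_num)
  have hy' := hy.derivWithin (m := 1) hU (by norm_num)
  have hΓ := fun t ht => hasDerivWithinAt_planePairing
    (hx.differentiableOn two_ne_zero t ht).hasDerivWithinAt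
    (hy.differentiableOn two_ne_zero t ht).hasDerivWithinAt
  have hΓ' := fun t ht => hasDerivWithinAt_planePairing
    (hx'.differentiableOn one_ne_zero t ht).hasDerivWithinAt
    (hy'.differentiableOn one_ne_zero t ht).hasDerivWithinAt
  have hΓ'' := continuousOn_planePairing (hx'.continuousOn_derivWithin hU le_rfl)
    (hy'.continuousOn_derivWithin hU le_rfl)
  have hdecay := tendsto_integral_cexp_dual_curve_cobounded hab.le hΓ hΓ' hΓ'' fun p hp =>
    ae_ne_of_hasDerivWithinAt_ne_zero
      (fun t ht => hasDerivWithinAt_dual_apply (hΓ' t ht) p)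
      (hcurv.mono fun t ht hmem => planePairing_ne_zero_of_eq_zero (ht hmem) hp)
  refine (hdecay.comp tendsto_neg_cobounded).congr fun p => ?_
  refine intervalIntegral.integral_congr fun t _ => ?_
  simp only [planePairing_apply, Prod.fst_neg, Prod.snd_neg]
  push_cast
  ring_nf

end Curves

/-- van der Corput decay: the Fourier transform of the arclength measure of a compact `C²`
plane curve with curvature bounded away from zero tends to `0` at infinity. -/
theorem fourier_decay_of_curved_arc
    (l : ℝ) (hl : 0 < l) (x y : ℝ → ℝ) (c : ℝ) (hc : 0 < c)
    (hx : ContDiffOn ℝ 2 x (Icc 0 l)) (hy : ContDiffOn ℝ 2 y (Icc 0 l))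
    (harc : ∀ t ∈ Icc (0:ℝ) l,
      (derivWithin x (Icc 0 l) t) ^ 2 + (derivWithin y (Icc 0 l) t) ^ 2 = 1)
    (hcurv : ∀ t ∈ Icc (0:ℝ) l,
      c ≤ |derivWithin x (Icc 0 l) t * derivWithin (derivWithin y (Icc 0 l)) (Icc 0 l) t
          - derivWithin (derivWithin x (Icc 0 l)) (Icc 0 l) t * derivWithin y (Icc 0 l) t|) :
    Tendsto (fun p : ℝ × ℝ =>
        (1 / (2 * π)) * ∫ t in (0:ℝ)..l,
          Complex.exp (-(Complex.I * ((p.1 * x t + p.2 * y t : ℝ) : ℂ))))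
      (Bornology.cobounded (ℝ × ℝ)) (nhds 0) := by
  have hdecay := fourier_decay_of_curved_arc_general hl hx hy
    (.of_forall fun t ht => abs_pos.1 (hc.trans_le (hcurv t ht)))
  simpa using hdecay.const_mul (1 / (2 * π) : ℂ)
end

section
/- Let q₀ be the quadratic form of the operator with Fourier symbol λ₋(p) = |p|² - |A(p)| satisfying 0 ≤ λ₋(p) - κ ≤ c·|p - p₀|² for all p, and let ψ_a(p) = f̂_a(p - p₀) where f_a(x) = exp(-|x|^a/2). Then 0 ≤ ∫_{ℝ²}(λ₋(p) - κ)|f̂_a(p - p₀)|² dp ≤ (π/2)·c·a, hence this quantity tends to 0 as a → 0+. -/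
open MeasureTheory Real Filter
open scoped RealInnerProductSpace

open Module (finrank)
open Set (Ioi Ici)
open scoped FourierTransform ENNReal Topology

/-!
After translating by `p₀`, the form is at most `c * ∫ ‖p‖² ‖f̂_a(p)‖² dp`, which Plancherel would
turn into the Dirichlet energy of `f_a`. For `a ≤ 1`, however, `f_a` is not differentiable at the
origin. Writing `f_a(x) = φ(‖x‖²)`, one uses the differentiable functions `φ(‖x‖² + ε)` instead.
In the plane the variable `s = ‖x‖² + ε` turns Lebesgue measure into `π ds` on `(ε, ∞)`, and the
squared gradient is at most `4 s φ'(s)²`, so their energies are bounded by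
`4π ∫₀^∞ s φ'(s)² ds = (π / 2) a` uniformly in `ε`. Fatou's lemma on the Fourier side, as `ε → 0`,
carries this bound over to `f_a`.
-/

section Plancherel

variable {V E F : Type*} [NormedAddCommGroup V] [InnerProductSpace ℝ V] [FiniteDimensional ℝ V]
  [MeasurableSpace V] [BorelSpace V] [NormedAddCommGroup E] [NormedSpace ℂ E]
  [NormedAddCommGroup F] [InnerProductSpace ℂ F]

theorem continuous_fourier_of_integrable {f : V → E} (hf : Integrable f) : Continuous (𝓕 f) :=
  VectorFourier.fourierIntegral_continuous Real.continuous_fourierChar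
    (innerSL ℝ).continuous₂ hf

theorem integral_schwartzMap_fourier_smul_eq [CompleteSpace E] {f : V → E}
    (hf : Integrable f) (ψ : SchwartzMap V ℂ) : ∫ x, 𝓕 ψ x • f x = ∫ x, ψ x • 𝓕 f x := by
  have := VectorFourier.integral_fourierIntegral_smul_eq_flip (L := innerₗ V) (μ := volume)
    (ν := volume) Real.continuous_fourierChar continuous_inner ψ.integrable hf
  rwa [flip_innerₗ] at this

variable [CompleteSpace F]

-- Both sides are the Fourier transform of `f` as a tempered distribution.
theorem fourier_toLp_ae_eq_fourier {f : V → F} (hf : Integrable f) (hf₂ : MemLp f 2) :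
    (𝓕 (hf₂.toLp f) : Lp F 2 (volume : Measure V)) =ᵐ[volume] 𝓕 f := by
  refine ae_eq_of_integral_contDiff_smul_eq ((Lp.memLp _).locallyIntegrable one_le_two)
    (continuous_fourier_of_integrable hf).locallyIntegrable fun φ φ_smooth φ_compact ↦ ?_
  have hψ_compact : HasCompactSupport (Complex.ofRealCLM ∘ φ) := φ_compact.comp_left rfl
  let ψ := hψ_compact.toSchwartzMap (by fun_prop)
  have real_smul_eq (H : V → F) : ∫ x, φ x • H x = ∫ x, ψ x • H x := by simp [ψ]
  have distribution_eq := congrArg (· ψ) (Lp.fourier_toTemperedDistribution_eq (hf₂.toLp f))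
  simp only [TemperedDistribution.fourier_apply, Lp.toTemperedDistribution_apply]
    at distribution_eq
  rw [real_smul_eq, real_smul_eq, ← distribution_eq, ← integral_schwartzMap_fourier_smul_eq hf]
  refine integral_congr_ae ?_
  filter_upwards [hf₂.coeFn_toLp] with x hx
  rw [hx]

theorem eLpNorm_two_fourier_eq {f : V → F} (hf : Integrable f) (hf₂ : MemLp f 2) :
    eLpNorm (𝓕 f) 2 = eLpNorm f 2 := by
  rw [← eLpNorm_congr_ae (fourier_toLp_ae_eq_fourier hf hf₂), ← eLpNorm_congr_ae hf₂.coeFn_toLp,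
    ← ENNReal.toReal_eq_toReal_iff' (Lp.memLp _).2.ne (Lp.memLp _).2.ne, ← Lp.norm_def,
    ← Lp.norm_def, Lp.norm_fourier_eq]

theorem lintegral_enorm_fourier_sq_eq {f : V → F} (hf : Integrable f) (hf₂ : MemLp f 2) :
    ∫⁻ w, ‖𝓕 f w‖ₑ ^ 2 = ∫⁻ x, ‖f x‖ₑ ^ 2 := by
  have lintegral_eq (g : V → F) : ∫⁻ x, ‖g x‖ₑ ^ 2 = eLpNorm g 2 ^ 2 := by
    simpa using (eLpNorm_nnreal_pow_eq_lintegral (f := g) (p := 2) (μ := volume) (by simp)).symm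
  rw [lintegral_eq, lintegral_eq, eLpNorm_two_fourier_eq hf hf₂]

end Plancherel

section OrthonormalBasis

variable {ι V : Type*} [Fintype ι] [NormedAddCommGroup V] [InnerProductSpace ℝ V]

theorem sum_enorm_inner_orthonormalBasis_sq (b : OrthonormalBasis ι ℝ V)
    (w : V) : ∑ i, ‖⟪w, b i⟫‖ₑ ^ 2 = ‖w‖ₑ ^ 2 := by
  simp_rw [← ofReal_norm, ← ENNReal.ofReal_pow (norm_nonneg _)]
  rw [← ENNReal.ofReal_sum_of_nonneg (fun _ _ ↦ by positivity), b.sum_sq_norm_inner_left]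

theorem sum_enorm_apply_orthonormalBasis_sq (b : OrthonormalBasis ι ℝ V)
    (L : V →L[ℝ] ℝ) : ∑ i, ‖L (b i)‖ₑ ^ 2 = ‖L‖ₑ ^ 2 := by
  have := b.toBasis.finiteDimensional_of_finite
  have := FiniteDimensional.complete ℝ V
  obtain ⟨u, rfl⟩ := (InnerProductSpace.toDual ℝ V).surjective L
  simp only [InnerProductSpace.toDual_apply_apply, sum_enorm_inner_orthonormalBasis_sq,
    LinearIsometryEquiv.enorm_map]

end OrthonormalBasis

section DirichletEnergy

variable {V E F : Type*} [NormedAddCommGroup V] [InnerProductSpace ℝ V] [FiniteDimensional ℝ V]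
  [MeasurableSpace V] [BorelSpace V] [NormedAddCommGroup E] [NormedSpace ℂ E]
  [NormedAddCommGroup F] [InnerProductSpace ℂ F]

theorem fourier_fderiv_apply {f : V → E} (hf : Integrable f) (hf_diff : Differentiable ℝ f)
    (hf' : Integrable (fderiv ℝ f)) (v w : V) :
    𝓕 (fun x ↦ fderiv ℝ f x v) w = (2 * π * Complex.I * ⟪w, v⟫) • 𝓕 f w := by
  rw [← Real.fourier_continuousLinearMap_apply hf', Real.fourier_fderiv hf hf_diff hf']
  change -(2 * π * Complex.I) • -⟪w, v⟫ • 𝓕 f w = _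
  simp [mul_smul]

variable [CompleteSpace F]

theorem lintegral_enorm_sq_mul_enorm_fourier_sq {ι : Type*} [Fintype ι]
    (b : OrthonormalBasis ι ℝ V) {f : V → F} (hf : Integrable f) (hf_diff : Differentiable ℝ f)
    (hf' : Integrable (fderiv ℝ f)) (hf'₂ : MemLp (fderiv ℝ f) 2) :
    ∫⁻ w, ‖(2 * π) • w‖ₑ ^ 2 * ‖𝓕 f w‖ₑ ^ 2 = ∫⁻ x, ∑ i, ‖fderiv ℝ f x (b i)‖ₑ ^ 2 := by
  have hf'_apply (v : V) : Integrable fun x ↦ fderiv ℝ f x v := hf'.apply_continuousLinearMap v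
  calc ∫⁻ w, ‖(2 * π) • w‖ₑ ^ 2 * ‖𝓕 f w‖ₑ ^ 2
      = ∫⁻ w, ∑ i, ‖𝓕 (fun x ↦ fderiv ℝ f x (b i)) w‖ₑ ^ 2 := by
        congr 1 with w
        simp only [fourier_fderiv_apply hf hf_diff hf', enorm_smul, enorm_mul, mul_pow,
          ← Finset.sum_mul, ← Finset.mul_sum, ← sum_enorm_inner_orthonormalBasis_sq b w]
        simp [enorm_eq_nnnorm]
    _ = ∑ i, ∫⁻ w, ‖𝓕 (fun x ↦ fderiv ℝ f x (b i)) w‖ₑ ^ 2 :=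
        lintegral_finsetSum _ fun i _ ↦
          (continuous_fourier_of_integrable (hf'_apply _)).enorm.measurable.pow_const 2
    _ = ∑ i, ∫⁻ x, ‖fderiv ℝ f x (b i)‖ₑ ^ 2 := by
        congr 1 with i
        exact lintegral_enorm_fourier_sq_eq (hf'_apply _)
          ((ContinuousLinearMap.apply ℝ F (b i)).comp_memLp' hf'₂)
    _ = ∫⁻ x, ∑ i, ‖fderiv ℝ f x (b i)‖ₑ ^ 2 :=
        (lintegral_finsetSum' _ fun i _ ↦ (hf'_apply _).aestronglyMeasurable.enorm.pow_const 2).symm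

theorem lintegral_enorm_sq_mul_enorm_fourier_ofReal_sq {f : V → ℝ} (hf : Integrable f)
    (hf_diff : Differentiable ℝ f) (hf' : Integrable (fderiv ℝ f))
    (hf'₂ : MemLp (fderiv ℝ f) 2) :
    ∫⁻ w, ‖(2 * π) • w‖ₑ ^ 2 * ‖𝓕 (fun x ↦ (f x : ℂ)) w‖ₑ ^ 2 = ∫⁻ x, ‖fderiv ℝ f x‖ₑ ^ 2 := by
  let ofRealComp : (V →L[ℝ] ℝ) →L[ℝ] V →L[ℝ] ℂ :=
    ContinuousLinearMap.compL ℝ V ℝ ℂ Complex.ofRealCLM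
  have fderiv_eq : fderiv ℝ (fun x ↦ (f x : ℂ)) = fun x ↦ ofRealComp (fderiv ℝ f x) :=
    funext fun x ↦ (Complex.ofRealCLM.hasFDerivAt.comp x (hf_diff x).hasFDerivAt).fderiv
  let b := stdOrthonormalBasis ℝ V
  rw [lintegral_enorm_sq_mul_enorm_fourier_sq b (f := fun x ↦ (f x : ℂ)) hf.ofReal
    (fun x ↦ Complex.ofRealCLM.differentiableAt.comp x (hf_diff x))
    (fderiv_eq ▸ ofRealComp.integrable_comp hf') (fderiv_eq ▸ ofRealComp.comp_memLp' hf'₂)]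
  congr 1 with x
  rw [← sum_enorm_apply_orthonormalBasis_sq b, fderiv_eq]
  simp [ofRealComp, enorm_eq_nnnorm]

end DirichletEnergy
section PolarCoordinates

variable {V F : Type*} [NormedAddCommGroup V] [InnerProductSpace ℝ V] [FiniteDimensional ℝ V]
  [MeasurableSpace V] [BorelSpace V] [Fact (finrank ℝ V = 2)]
  [NormedAddCommGroup F] [NormedSpace ℝ F]

theorem volume_real_unitBall_eq_pi : volume.real (Metric.ball (0 : V) 1) = π := by
  have := Module.nontrivial_of_finrank_eq_succ (Fact.out : finrank ℝ V = 2)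
  simp [Measure.real, InnerProductSpace.volume_ball_of_dim_even (k := 1) (E := V) Fact.out,
    pi_pos.le]

theorem image_sq_add_Ioi (ε : ℝ) : (fun r : ℝ ↦ r ^ 2 + ε) '' Ioi 0 = Ioi ε := by
  ext s
  constructor
  · rintro ⟨r, hr : 0 < r, rfl⟩
    simpa using pow_pos hr 2
  · intro hs
    have : 0 < s - ε := sub_pos.2 hs
    exact ⟨√(s - ε), sqrt_pos.2 this, by simp [sq_sqrt this.le]⟩

theorem hasDerivWithinAt_sq_add (ε : ℝ) (S : Set ℝ) (r : ℝ) :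
    HasDerivWithinAt (fun r : ℝ ↦ r ^ 2 + ε) (2 * r) S r := by
  simpa using ((hasDerivAt_pow 2 r).add_const ε).hasDerivWithinAt

theorem monotoneOn_sq_add (ε : ℝ) : MonotoneOn (fun r : ℝ ↦ r ^ 2 + ε) (Ioi 0) :=
  fun _ hr _ _ hrt ↦
    add_le_add_left (pow_le_pow_left₀ (le_of_lt hr) hrt 2) ε

theorem integrable_comp_norm_sq_add_iff {g : ℝ → F} {ε : ℝ} :
    Integrable (fun x : V ↦ g (‖x‖ ^ 2 + ε)) ↔ IntegrableOn g (Ioi ε) := by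
  have := Module.nontrivial_of_finrank_eq_succ (Fact.out : finrank ℝ V = 2)
  rw [integrable_fun_norm_addHaar volume (f := fun r ↦ g (r ^ 2 + ε)), ← image_sq_add_Ioi ε,
    integrableOn_image_iff_integrableOn_deriv_smul_of_monotoneOn measurableSet_Ioi
      (fun r _ ↦ hasDerivWithinAt_sq_add ε _ r) (monotoneOn_sq_add ε)]
  simp only [(Fact.out : finrank ℝ V = 2), mul_smul, Nat.add_one_sub_one, pow_one]
  exact (integrable_smul_iff two_ne_zero _).symm

theorem integral_comp_norm_sq_add (g : ℝ → F) (ε : ℝ) :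
    ∫ x : V, g (‖x‖ ^ 2 + ε) = π • ∫ s in Ioi ε, g s := by
  have := Module.nontrivial_of_finrank_eq_succ (Fact.out : finrank ℝ V = 2)
  rw [integral_fun_norm_addHaar volume (fun r ↦ g (r ^ 2 + ε)), ← image_sq_add_Ioi ε,
    integral_image_eq_integral_deriv_smul_of_monotoneOn measurableSet_Ioi
      (fun r _ ↦ hasDerivWithinAt_sq_add ε _ r) (monotoneOn_sq_add ε)]
  simp only [(Fact.out : finrank ℝ V = 2), mul_smul, Nat.add_one_sub_one, pow_one,
    volume_real_unitBall_eq_pi]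
  rw [integral_smul, smul_comm, ofNat_smul_eq_nsmul ℝ]

end PolarCoordinates

section AngularFourier

variable {V F : Type*} [NormedAddCommGroup V] [InnerProductSpace ℝ V] [FiniteDimensional ℝ V]
  [MeasurableSpace V] [BorelSpace V] [NormedAddCommGroup F] [NormedSpace ℂ F]

/-- The unitary Fourier transform in angular frequency,
`p ↦ (2π)^(-d/2) ∫ exp(-i ⟪p, x⟫) f(x) dx` with `d = dim V`, which is the convention for `f̂_a`.
Mathlib's `𝓕` uses the kernel `exp(-2πi ⟪w, x⟫)` and no prefactor. -/
noncomputable def angularFourier (f : V → F) (p : V) : F :=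
  (2 * π) ^ (-(finrank ℝ V / 2 : ℝ)) •
    ∫ x, Complex.exp (-(Complex.I * (⟪p, x⟫ : ℝ))) • f x

theorem angularFourier_eq_smul_fourier (f : V → F) (p : V) :
    angularFourier f p = (2 * π) ^ (-(finrank ℝ V / 2 : ℝ)) • 𝓕 f ((2 * π)⁻¹ • p) := by
  rw [angularFourier, Real.fourier_eq']
  congr! 5 with x
  rw [real_inner_smul_right, real_inner_comm]
  push_cast
  field_simp

theorem norm_sq_mul_norm_angularFourier_sq (f : V → F) (p : V) :
    ‖p‖ ^ 2 * ‖angularFourier f p‖ ^ 2 = ((2 * π) ^ finrank ℝ V)⁻¹ *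
      (‖(2 * π) • (2 * π)⁻¹ • p‖ ^ 2 * ‖𝓕 f ((2 * π)⁻¹ • p)‖ ^ 2) := by
  have hpi : 0 < 2 * π := by positivity
  have factor_sq : ‖(2 * π) ^ (-(finrank ℝ V / 2 : ℝ))‖ ^ 2 = ((2 * π) ^ finrank ℝ V)⁻¹ := by
    rw [norm_of_nonneg (by positivity), ← rpow_mul_natCast hpi.le, ← rpow_natCast,
      ← rpow_neg hpi.le]
    congr 1
    push_cast
    ring
  rw [angularFourier_eq_smul_fourier, norm_smul, mul_pow, factor_sq, smul_inv_smul₀ hpi.ne']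
  ring

theorem integrable_norm_sq_mul_norm_angularFourier_sq_iff {f : V → F} :
    Integrable (fun p ↦ ‖p‖ ^ 2 * ‖angularFourier f p‖ ^ 2) ↔
      Integrable (fun w ↦ ‖(2 * π) • w‖ ^ 2 * ‖𝓕 f w‖ ^ 2) := by
  simp only [norm_sq_mul_norm_angularFourier_sq]
  rw [integrable_const_mul_iff (by simp [pi_ne_zero]),
    integrable_comp_smul_iff volume (fun w ↦ ‖(2 * π) • w‖ ^ 2 * ‖𝓕 f w‖ ^ 2)
      (inv_ne_zero two_pi_pos.ne')]

theorem integral_norm_sq_mul_norm_angularFourier_sq (f : V → F) :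
    ∫ p, ‖p‖ ^ 2 * ‖angularFourier f p‖ ^ 2 = ∫ w, ‖(2 * π) • w‖ ^ 2 * ‖𝓕 f w‖ ^ 2 := by
  simp only [norm_sq_mul_norm_angularFourier_sq]
  rw [integral_const_mul,
    Measure.integral_comp_smul volume (fun w ↦ ‖(2 * π) • w‖ ^ 2 * ‖𝓕 f w‖ ^ 2), smul_eq_mul,
    inv_pow, inv_inv, abs_of_pos (by positivity), inv_mul_cancel_left₀ (by positivity)]

end AngularFourier

theorem integral_mul_norm_comp_sub_sq_mem_Icc {V F : Type*} [NormedAddCommGroup V]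
    [MeasurableSpace V] [BorelSpace V] {μ : Measure V} [μ.IsAddRightInvariant]
    [NormedAddCommGroup F] {m : V → ℝ} {c : ℝ} {p₀ : V} (hm : ∀ p, 0 ≤ m p)
    (hm_le : ∀ p, m p ≤ c * ‖p - p₀‖ ^ 2) {g : V → F}
    (hg : Integrable (fun q ↦ ‖q‖ ^ 2 * ‖g q‖ ^ 2) μ) :
    ∫ p, m p * ‖g (p - p₀)‖ ^ 2 ∂μ ∈ Set.Icc 0 (c * ∫ q, ‖q‖ ^ 2 * ‖g q‖ ^ 2 ∂μ) := by
  have integrand_nonneg (p : V) : 0 ≤ m p * ‖g (p - p₀)‖ ^ 2 := mul_nonneg (hm p) (sq_nonneg _)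
  refine ⟨integral_nonneg integrand_nonneg, ?_⟩
  rw [← integral_sub_right_eq_self (fun q ↦ ‖q‖ ^ 2 * ‖g q‖ ^ 2) p₀, ← integral_const_mul]
  refine integral_mono_of_nonneg (.of_forall integrand_nonneg)
    ((hg.comp_sub_right p₀).const_mul c) (.of_forall fun p ↦ ?_)
  dsimp only
  rw [← mul_assoc]
  gcongr
  exact hm_le p

section RadialProfile

/-- The requirements on a profile `φ` under which the radial function `x ↦ φ (‖x‖ ^ 2)` on a plane
has finite Dirichlet energy and can be approximated by the smoother functions
`x ↦ φ (‖x‖ ^ 2 + ε)`, `ε > 0`. In the variable `s = ‖x‖ ^ 2` the gradient has length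
`2 * √s * |deriv φ s|`, and `φ` need not be differentiable at `0`. -/
structure IsRadialProfile (φ : ℝ → ℝ) : Prop where
  nonneg : ∀ s ∈ Ici 0, 0 ≤ φ s
  antitoneOn : AntitoneOn φ (Ici 0)
  continuousOn : ContinuousOn φ (Ici 0)
  differentiableOn : DifferentiableOn ℝ φ (Ioi 0)
  integrableOn : IntegrableOn φ (Ioi 0)
  integrableOn_sqrt_mul_deriv : IntegrableOn (fun s ↦ √s * deriv φ s) (Ioi 0)
  integrableOn_mul_deriv_sq : IntegrableOn (fun s ↦ s * deriv φ s ^ 2) (Ioi 0)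

theorem hasFDerivAt_comp_norm_sq_add {V : Type*} [NormedAddCommGroup V] [InnerProductSpace ℝ V]
    {φ : ℝ → ℝ} {φ' ε : ℝ} {x : V} (hφ : HasDerivAt φ φ' (‖x‖ ^ 2 + ε)) :
    HasFDerivAt (fun y : V ↦ φ (‖y‖ ^ 2 + ε)) ((φ' * 2) • innerSL ℝ x) x := by
  have := hφ.comp_hasFDerivAt x ((hasStrictFDerivAt_norm_sq x).hasFDerivAt.add_const ε)
  rwa [← ofNat_smul_eq_nsmul ℝ, smul_smul] at this

namespace IsRadialProfile

variable {φ : ℝ → ℝ} {ε : ℝ}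
  {V : Type*} [NormedAddCommGroup V] [InnerProductSpace ℝ V]

theorem hasFDerivAt (hφ : IsRadialProfile φ) (hε : 0 < ε) (x : V) :
    HasFDerivAt (fun y : V ↦ φ (‖y‖ ^ 2 + ε)) ((deriv φ (‖x‖ ^ 2 + ε) * 2) • innerSL ℝ x) x :=
  hasFDerivAt_comp_norm_sq_add
    (hφ.differentiableOn.differentiableAt (Ioi_mem_nhds (by positivity))).hasDerivAt

theorem differentiable (hφ : IsRadialProfile φ) (hε : 0 < ε) :
    Differentiable ℝ fun x : V ↦ φ (‖x‖ ^ 2 + ε) :=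
  fun x ↦ (hφ.hasFDerivAt hε x).differentiableAt

theorem norm_fderiv_le (hφ : IsRadialProfile φ) (hε : 0 < ε) (x : V) :
    ‖fderiv ℝ (fun y : V ↦ φ (‖y‖ ^ 2 + ε)) x‖ ≤
      2 * ‖√(‖x‖ ^ 2 + ε) * deriv φ (‖x‖ ^ 2 + ε)‖ := by
  have norm_le_sqrt : ‖x‖ ≤ √(‖x‖ ^ 2 + ε) := le_sqrt_of_sq_le (by linarith)
  calc ‖fderiv ℝ (fun y : V ↦ φ (‖y‖ ^ 2 + ε)) x‖
      = 2 * (‖x‖ * ‖deriv φ (‖x‖ ^ 2 + ε)‖) := by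
        rw [(hφ.hasFDerivAt hε x).fderiv, norm_smul, norm_mul, innerSL_apply_norm, norm_two]
        ring
    _ ≤ 2 * (√(‖x‖ ^ 2 + ε) * ‖deriv φ (‖x‖ ^ 2 + ε)‖) := by gcongr
    _ = 2 * ‖√(‖x‖ ^ 2 + ε) * deriv φ (‖x‖ ^ 2 + ε)‖ := by
        rw [norm_mul, norm_of_nonneg (sqrt_nonneg _)]

theorem norm_fderiv_sq_le (hφ : IsRadialProfile φ) (hε : 0 < ε) (x : V) :
    ‖fderiv ℝ (fun y : V ↦ φ (‖y‖ ^ 2 + ε)) x‖ ^ 2 ≤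
      4 * ((‖x‖ ^ 2 + ε) * deriv φ (‖x‖ ^ 2 + ε) ^ 2) := by
  calc ‖fderiv ℝ (fun y : V ↦ φ (‖y‖ ^ 2 + ε)) x‖ ^ 2
      ≤ (2 * ‖√(‖x‖ ^ 2 + ε) * deriv φ (‖x‖ ^ 2 + ε)‖) ^ 2 := by
        gcongr
        exact hφ.norm_fderiv_le hε x
    _ = 4 * ((‖x‖ ^ 2 + ε) * deriv φ (‖x‖ ^ 2 + ε) ^ 2) := by
        rw [mul_pow, norm_eq_abs, sq_abs, mul_pow, sq_sqrt (by positivity)]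
        norm_num

variable [FiniteDimensional ℝ V] [MeasurableSpace V] [BorelSpace V] [Fact (finrank ℝ V = 2)]

theorem integrable (hφ : IsRadialProfile φ) (hε : 0 ≤ ε) :
    Integrable fun x : V ↦ φ (‖x‖ ^ 2 + ε) :=
  integrable_comp_norm_sq_add_iff.2 (hφ.integrableOn.mono_set (Set.Ioi_subset_Ioi hε))

theorem integrable_fderiv (hφ : IsRadialProfile φ) (hε : 0 < ε) :
    Integrable (fderiv ℝ fun x : V ↦ φ (‖x‖ ^ 2 + ε)) :=
  ((integrable_comp_norm_sq_add_iff.2 (hφ.integrableOn_sqrt_mul_deriv.mono_set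
    (Set.Ioi_subset_Ioi hε.le))).norm.const_mul 2).mono'
    (measurable_fderiv ℝ _).aestronglyMeasurable
    (.of_forall (hφ.norm_fderiv_le hε))

theorem integrable_mul_deriv_sq (hφ : IsRadialProfile φ) (hε : 0 ≤ ε) :
    Integrable fun x : V ↦ 4 * ((‖x‖ ^ 2 + ε) * deriv φ (‖x‖ ^ 2 + ε) ^ 2) :=
  (integrable_comp_norm_sq_add_iff.2 (hφ.integrableOn_mul_deriv_sq.mono_set
    (Set.Ioi_subset_Ioi hε))).const_mul 4

theorem memLp_two_fderiv (hφ : IsRadialProfile φ) (hε : 0 < ε) :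
    MemLp (fderiv ℝ fun x : V ↦ φ (‖x‖ ^ 2 + ε)) 2 := by
  have fderiv_meas := measurable_fderiv ℝ fun x : V ↦ φ (‖x‖ ^ 2 + ε)
  rw [memLp_two_iff_integrable_sq_norm fderiv_meas.aestronglyMeasurable]
  refine (hφ.integrable_mul_deriv_sq hε.le).mono'
    (fderiv_meas.norm.pow_const 2).aestronglyMeasurable (.of_forall fun x ↦ ?_)
  rw [norm_of_nonneg (by positivity)]
  exact hφ.norm_fderiv_sq_le hε x

-- The bound does not depend on `ε`: the shift by `ε` only shrinks the domain of integration in `s`.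
theorem lintegral_enorm_fderiv_sq_le (hφ : IsRadialProfile φ) (hε : 0 < ε) :
    ∫⁻ x : V, ‖fderiv ℝ (fun y : V ↦ φ (‖y‖ ^ 2 + ε)) x‖ₑ ^ 2 ≤
      ENNReal.ofReal (4 * π * ∫ s in Ioi 0, s * deriv φ s ^ 2) := by
  have energy_density_nonneg : ∀ s ∈ Ioi (0 : ℝ), 0 ≤ s * deriv φ s ^ 2 :=
    fun s hs ↦ mul_nonneg (le_of_lt hs) (sq_nonneg _)
  calc ∫⁻ x : V, ‖fderiv ℝ (fun y : V ↦ φ (‖y‖ ^ 2 + ε)) x‖ₑ ^ 2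
      ≤ ∫⁻ x : V, ENNReal.ofReal (4 * ((‖x‖ ^ 2 + ε) * deriv φ (‖x‖ ^ 2 + ε) ^ 2)) := by
        refine lintegral_mono fun x ↦ ?_
        rw [← ofReal_norm, ← ENNReal.ofReal_pow (norm_nonneg _)]
        exact ENNReal.ofReal_le_ofReal (hφ.norm_fderiv_sq_le hε x)
    _ = ENNReal.ofReal (∫ x : V, 4 * ((‖x‖ ^ 2 + ε) * deriv φ (‖x‖ ^ 2 + ε) ^ 2)) :=
        (ofReal_integral_eq_lintegral_ofReal (hφ.integrable_mul_deriv_sq hε.le)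
          (.of_forall fun x ↦ by dsimp only [Pi.zero_apply]; positivity)).symm
    _ = ENNReal.ofReal (4 * π * ∫ s in Ioi ε, s * deriv φ s ^ 2) := by
        rw [integral_const_mul, integral_comp_norm_sq_add (fun s ↦ s * deriv φ s ^ 2),
          smul_eq_mul, mul_assoc]
    _ ≤ ENNReal.ofReal (4 * π * ∫ s in Ioi 0, s * deriv φ s ^ 2) := by
        gcongr
        · exact ae_restrict_of_forall_mem measurableSet_Ioi energy_density_nonneg
        · exact hφ.integrableOn_mul_deriv_sq

theorem tendsto_fourier (hφ : IsRadialProfile φ) (w : V) :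
    Tendsto (fun ε ↦ 𝓕 (fun x : V ↦ (φ (‖x‖ ^ 2 + ε) : ℂ)) w) (𝓝[>] 0)
      (𝓝 (𝓕 (fun x : V ↦ (φ (‖x‖ ^ 2) : ℂ)) w)) := by
  simp only [Real.fourier_eq]
  refine tendsto_integral_filter_of_dominated_convergence (fun x ↦ φ (‖x‖ ^ 2)) ?_ ?_
    (by simpa using hφ.integrable (V := V) le_rfl) (.of_forall fun x ↦ ?_)
  · filter_upwards [self_mem_nhdsWithin] with ε hε
    exact ((Real.fourierIntegral_convergent_iff w).2
      (hφ.integrable (V := V) (le_of_lt hε)).ofReal).aestronglyMeasurable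
  · filter_upwards [self_mem_nhdsWithin] with ε (hε : 0 < ε)
    refine .of_forall fun x ↦ ?_
    have shift_nonneg : 0 ≤ ‖x‖ ^ 2 + ε := by positivity
    rw [Circle.norm_smul, Complex.norm_real, norm_of_nonneg (hφ.nonneg _ shift_nonneg)]
    exact hφ.antitoneOn (sq_nonneg ‖x‖) shift_nonneg (by linarith)
  · have shift_tendsto : Tendsto (fun ε ↦ ‖x‖ ^ 2 + ε) (𝓝[>] 0) (𝓝[Ici 0] (‖x‖ ^ 2)) := by
      refine tendsto_nhdsWithin_iff.2 ⟨?_, ?_⟩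
      · exact (Continuous.tendsto' (by fun_prop) 0 _ (by simp)).mono_left nhdsWithin_le_nhds
      · filter_upwards [self_mem_nhdsWithin] with ε (hε : 0 < ε)
        exact add_nonneg (sq_nonneg ‖x‖) hε.le
    exact ((Complex.continuous_ofReal.tendsto _).comp
      ((hφ.continuousOn _ (sq_nonneg ‖x‖)).tendsto.comp shift_tendsto)).const_smul _

theorem lintegral_enorm_sq_mul_enorm_fourier_sq_le (hφ : IsRadialProfile φ) :
    ∫⁻ w : V, ‖(2 * π) • w‖ₑ ^ 2 * ‖𝓕 (fun x : V ↦ (φ (‖x‖ ^ 2) : ℂ)) w‖ₑ ^ 2 ≤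
      ENNReal.ofReal (4 * π * ∫ s in Ioi 0, s * deriv φ s ^ 2) := by
  obtain ⟨ε, -, ε_pos, ε_tendsto⟩ := exists_seq_strictAnti_tendsto (0 : ℝ)
  have ε_tendsto_right : Tendsto ε atTop (𝓝[>] 0) :=
    tendsto_nhdsWithin_iff.2 ⟨ε_tendsto, .of_forall ε_pos⟩
  let density (n : ℕ) (w : V) : ℝ≥0∞ :=
    ‖(2 * π) • w‖ₑ ^ 2 * ‖𝓕 (fun x : V ↦ (φ (‖x‖ ^ 2 + ε n) : ℂ)) w‖ₑ ^ 2
  have density_meas (n : ℕ) : Measurable (density n) :=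
    ((measurable_const_smul _).enorm.pow_const 2).mul
      ((continuous_fourier_of_integrable
        (hφ.integrable (ε_pos n).le).ofReal).enorm.measurable.pow_const 2)
  have density_tendsto (w : V) : Tendsto (density · w) atTop
      (𝓝 (‖(2 * π) • w‖ₑ ^ 2 * ‖𝓕 (fun x : V ↦ (φ (‖x‖ ^ 2) : ℂ)) w‖ₑ ^ 2)) :=
    ENNReal.Tendsto.const_mul
      (ENNReal.Tendsto.pow ((hφ.tendsto_fourier w).comp ε_tendsto_right).enorm)
      (.inr (by finiteness))
  have lintegral_density_le (n : ℕ) :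
      ∫⁻ w, density n w ≤ ENNReal.ofReal (4 * π * ∫ s in Ioi 0, s * deriv φ s ^ 2) := by
    rw [lintegral_enorm_sq_mul_enorm_fourier_ofReal_sq (hφ.integrable (ε_pos n).le)
      (hφ.differentiable (ε_pos n)) (hφ.integrable_fderiv (ε_pos n))
      (hφ.memLp_two_fderiv (ε_pos n))]
    exact hφ.lintegral_enorm_fderiv_sq_le (ε_pos n)
  simp_rw [← fun w ↦ (density_tendsto w).liminf_eq]
  exact (lintegral_liminf_le density_meas).trans
    (liminf_le_of_frequently_le' (.of_forall lintegral_density_le))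

theorem integrable_norm_sq_mul_norm_fourier_sq (hφ : IsRadialProfile φ) :
    Integrable fun w : V ↦ ‖(2 * π) • w‖ ^ 2 * ‖𝓕 (fun x : V ↦ (φ (‖x‖ ^ 2) : ℂ)) w‖ ^ 2 := by
  have φ_integrable : Integrable fun x : V ↦ φ (‖x‖ ^ 2) := by simpa using hφ.integrable le_rfl
  have fourier_cont := continuous_fourier_of_integrable (φ_integrable.ofReal (𝕜 := ℂ))
  refine ⟨by fun_prop, ?_⟩
  rw [HasFiniteIntegral]
  simp only [enorm_mul, enorm_pow, enorm_norm]
  exact hφ.lintegral_enorm_sq_mul_enorm_fourier_sq_le.trans_lt ENNReal.ofReal_lt_top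

theorem integral_norm_sq_mul_norm_fourier_sq_le (hφ : IsRadialProfile φ) :
    ∫ w : V, ‖(2 * π) • w‖ ^ 2 * ‖𝓕 (fun x : V ↦ (φ (‖x‖ ^ 2) : ℂ)) w‖ ^ 2 ≤
      4 * π * ∫ s in Ioi 0, s * deriv φ s ^ 2 := by
  have energy_nonneg : 0 ≤ ∫ s in Ioi 0, s * deriv φ s ^ 2 :=
    setIntegral_nonneg measurableSet_Ioi fun s hs ↦ mul_nonneg (le_of_lt hs) (sq_nonneg _)
  rw [← ENNReal.ofReal_le_ofReal_iff (by positivity),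
    ofReal_integral_eq_lintegral_ofReal hφ.integrable_norm_sq_mul_norm_fourier_sq
      (.of_forall fun w ↦ by dsimp only [Pi.zero_apply]; positivity)]
  simp only [ENNReal.ofReal_mul (sq_nonneg _), ENNReal.ofReal_pow (norm_nonneg _), ofReal_norm]
  exact hφ.lintegral_enorm_sq_mul_enorm_fourier_sq_le

theorem integrable_norm_sq_mul_norm_angularFourier_sq (hφ : IsRadialProfile φ) :
    Integrable fun p : V ↦
      ‖p‖ ^ 2 * ‖angularFourier (fun x : V ↦ (φ (‖x‖ ^ 2) : ℂ)) p‖ ^ 2 :=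
  integrable_norm_sq_mul_norm_angularFourier_sq_iff.2 hφ.integrable_norm_sq_mul_norm_fourier_sq

theorem integral_norm_sq_mul_norm_angularFourier_sq_le (hφ : IsRadialProfile φ) :
    ∫ p : V, ‖p‖ ^ 2 * ‖angularFourier (fun x : V ↦ (φ (‖x‖ ^ 2) : ℂ)) p‖ ^ 2 ≤
      4 * π * ∫ s in Ioi 0, s * deriv φ s ^ 2 := by
  rw [integral_norm_sq_mul_norm_angularFourier_sq]
  exact hφ.integral_norm_sq_mul_norm_fourier_sq_le

end IsRadialProfile

end RadialProfile

section StretchedExponential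

/-- The stretched exponential `exp (-s ^ b / 2)`. The function `f_a` of the estimate is
`x ↦ stretchedExp (a / 2) (‖x‖ ^ 2)`. -/
noncomputable def stretchedExp (b s : ℝ) : ℝ := exp (-s ^ b / 2)

variable {b s : ℝ}

theorem stretchedExp_half_norm_sq {E : Type*} [SeminormedAddCommGroup E] (a : ℝ) (x : E) :
    stretchedExp (a / 2) (‖x‖ ^ 2) = exp (-‖x‖ ^ a / 2) := by
  rw [stretchedExp, ← rpow_natCast_mul (norm_nonneg x), Nat.cast_ofNat,
    mul_div_cancel₀ a two_ne_zero]

theorem stretchedExp_sq (b s : ℝ) : stretchedExp b s ^ 2 = exp (-s ^ b) := by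
  rw [stretchedExp, ← exp_nat_mul, Nat.cast_ofNat, mul_div_cancel₀ _ two_ne_zero]

theorem hasDerivAt_stretchedExp (hs : 0 < s) :
    HasDerivAt (stretchedExp b) (-(b / 2) * (s ^ (b - 1) * stretchedExp b s)) s := by
  have exponent_deriv : HasDerivAt (fun t ↦ -t ^ b / 2) (-(b * s ^ (b - 1)) / 2) s :=
    (hasDerivAt_rpow_const (.inl hs.ne')).fun_neg.div_const 2
  refine exponent_deriv.exp.congr_deriv ?_
  rw [stretchedExp]
  ring

theorem sqrt_mul_deriv_stretchedExp (hs : 0 < s) :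
    √s * deriv (stretchedExp b) s = -(b / 2) * (s ^ (b - 1 / 2) * stretchedExp b s) := by
  have rpow_eq : √s * s ^ (b - 1) = s ^ (b - 1 / 2) := by
    rw [sqrt_eq_rpow, ← rpow_add hs]
    ring_nf
  rw [(hasDerivAt_stretchedExp hs).deriv, ← rpow_eq]
  ring

theorem mul_deriv_stretchedExp_sq (hs : 0 < s) :
    s * deriv (stretchedExp b) s ^ 2 = (b / 2) ^ 2 * (s ^ (2 * b - 1) * exp (-s ^ b)) := by
  have rpow_sq : (s ^ (b - 1 / 2)) ^ 2 = s ^ (2 * b - 1) := by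
    rw [← rpow_mul_natCast hs.le]
    ring_nf
  calc s * deriv (stretchedExp b) s ^ 2
      = (√s * deriv (stretchedExp b) s) ^ 2 := by rw [mul_pow, sq_sqrt hs.le]
    _ = (b / 2) ^ 2 * (s ^ (2 * b - 1) * exp (-s ^ b)) := by
      rw [sqrt_mul_deriv_stretchedExp hs, ← rpow_sq, ← stretchedExp_sq]
      ring

theorem integrableOn_rpow_mul_stretchedExp {q : ℝ} (hq : -1 < q) (hb : 0 < b) :
    IntegrableOn (fun s ↦ s ^ q * stretchedExp b s) (Ioi 0) := by
  refine (integrableOn_rpow_mul_exp_neg_mul_rpow hq hb (half_pos one_pos)).congr_fun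
    (fun s _ ↦ ?_) measurableSet_Ioi
  rw [stretchedExp]
  ring_nf

theorem isRadialProfile_stretchedExp (hb : 0 < b) : IsRadialProfile (stretchedExp b) where
  nonneg _ _ := (exp_pos _).le
  antitoneOn s (hs : 0 ≤ s) t _ hst := by
    unfold stretchedExp
    gcongr
  continuousOn := ((continuous_rpow_const hb.le).neg.div_const 2).rexp.continuousOn
  differentiableOn s hs := (hasDerivAt_stretchedExp hs).differentiableAt.differentiableWithinAt
  integrableOn := by simpa using integrableOn_rpow_mul_stretchedExp (q := 0) (by norm_num) hb
  integrableOn_sqrt_mul_deriv :=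
    (integrableOn_congr_fun (fun _ hs ↦ sqrt_mul_deriv_stretchedExp hs) measurableSet_Ioi).2
      ((integrableOn_rpow_mul_stretchedExp (by linarith) hb).const_mul _)
  integrableOn_mul_deriv_sq :=
    (integrableOn_congr_fun (fun _ hs ↦ mul_deriv_stretchedExp_sq hs) measurableSet_Ioi).2
      ((integrableOn_rpow_mul_exp_neg_rpow (by linarith) hb).const_mul _)

theorem integral_mul_deriv_stretchedExp_sq (hb : 0 < b) :
    ∫ s in Ioi 0, s * deriv (stretchedExp b) s ^ 2 = b / 4 := by
  have gamma_arg : (2 * b - 1 + 1) / b = 2 := by field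
  rw [setIntegral_congr_fun measurableSet_Ioi fun _ ↦ mul_deriv_stretchedExp_sq,
    integral_const_mul, integral_rpow_mul_exp_neg_rpow hb (by linarith), gamma_arg, Gamma_two]
  field

theorem integral_norm_sq_mul_norm_angularFourier_stretchedExp_sq_le {V : Type*}
    [NormedAddCommGroup V] [InnerProductSpace ℝ V] [FiniteDimensional ℝ V] [MeasurableSpace V]
    [BorelSpace V] [Fact (finrank ℝ V = 2)] (hb : 0 < b) :
    ∫ p : V, ‖p‖ ^ 2 * ‖angularFourier (fun x : V ↦ (stretchedExp b (‖x‖ ^ 2) : ℂ)) p‖ ^ 2 ≤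
      π * b := by
  calc ∫ p : V, ‖p‖ ^ 2 * ‖angularFourier (fun x : V ↦ (stretchedExp b (‖x‖ ^ 2) : ℂ)) p‖ ^ 2
      ≤ 4 * π * ∫ s in Ioi 0, s * deriv (stretchedExp b) s ^ 2 :=
        (isRadialProfile_stretchedExp hb).integral_norm_sq_mul_norm_angularFourier_sq_le
    _ = π * b := by
        rw [integral_mul_deriv_stretchedExp_sq hb]
        ring

end StretchedExponential

/-- With `0 ≤ λ₋(p) - κ ≤ c|p - p₀|²` and `f̂_a` the (unitary) Fourier transform of
`f_a(x) = exp(-|x|^a/2)`, one has `0 ≤ ∫ (λ₋(p)-κ)|f̂_a(p-p₀)|² dp ≤ (π/2)·c·a`,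
which tends to `0` as `a → 0+`. -/
theorem form_estimate_tends_to_zero
    (lam : EuclideanSpace ℝ (Fin 2) → ℝ) (hmeas : Measurable lam)
    (κ c : ℝ) (hc : 0 < c) (p₀ : EuclideanSpace ℝ (Fin 2))
    (hbound : ∀ p : EuclideanSpace ℝ (Fin 2),
      0 ≤ lam p - κ ∧ lam p - κ ≤ c * ‖p - p₀‖ ^ 2)
    (fhat : ℝ → EuclideanSpace ℝ (Fin 2) → ℂ)
    (hfhat : ∀ a : ℝ, ∀ p : EuclideanSpace ℝ (Fin 2), fhat a p =
      (1 / (2 * π)) * ∫ x : EuclideanSpace ℝ (Fin 2),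
        Complex.exp (-(Complex.I * (⟪p, x⟫ : ℝ))) * ((Real.exp (-‖x‖ ^ a / 2) : ℝ) : ℂ)) :
    (∀ a : ℝ, 0 < a →
      0 ≤ (∫ p : EuclideanSpace ℝ (Fin 2), (lam p - κ) * ‖fhat a (p - p₀)‖ ^ 2) ∧
      (∫ p : EuclideanSpace ℝ (Fin 2), (lam p - κ) * ‖fhat a (p - p₀)‖ ^ 2)
        ≤ (π / 2) * c * a) ∧
    Tendsto (fun a : ℝ => ∫ p : EuclideanSpace ℝ (Fin 2), (lam p - κ) * ‖fhat a (p - p₀)‖ ^ 2)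
      (nhdsWithin 0 (Set.Ioi 0)) (nhds 0) := by
  have : Fact (finrank ℝ (EuclideanSpace ℝ (Fin 2)) = 2) := ⟨finrank_euclideanSpace_fin⟩
  let f (a : ℝ) (x : EuclideanSpace ℝ (Fin 2)) : ℂ := stretchedExp (a / 2) (‖x‖ ^ 2)
  have fhat_eq (a : ℝ) : fhat a = angularFourier (f a) := by
    ext p
    simp [hfhat, f, angularFourier, stretchedExp_half_norm_sq, rpow_neg_one]
  have form_bounds {a : ℝ} (ha : 0 < a) :
      ∫ p, (lam p - κ) * ‖fhat a (p - p₀)‖ ^ 2 ∈ Set.Icc 0 ((π / 2) * c * a) := by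
    rw [fhat_eq]
    obtain ⟨form_nonneg, form_le⟩ := integral_mul_norm_comp_sub_sq_mem_Icc
      (fun p ↦ (hbound p).1) (fun p ↦ (hbound p).2)
      (isRadialProfile_stretchedExp (half_pos ha)).integrable_norm_sq_mul_norm_angularFourier_sq
    refine ⟨form_nonneg, form_le.trans ?_⟩
    calc c * ∫ q, ‖q‖ ^ 2 * ‖angularFourier (f a) q‖ ^ 2
        ≤ c * (π * (a / 2)) := by
          gcongr
          exact integral_norm_sq_mul_norm_angularFourier_stretchedExp_sq_le (half_pos ha)
      _ = (π / 2) * c * a := by ring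
  refine ⟨fun a ha ↦ form_bounds ha, ?_⟩
  have bound_tendsto : Tendsto (fun a ↦ (π / 2) * c * a) (𝓝[>] 0) (𝓝 0) :=
    (Continuous.tendsto' (by fun_prop) 0 0 (mul_zero _)).mono_left nhdsWithin_le_nhds
  exact squeeze_zero' (eventually_mem_nhdsWithin.mono fun a ha ↦ (form_bounds ha).1)
    (eventually_mem_nhdsWithin.mono fun a ha ↦ (form_bounds ha).2) bound_tendsto
end
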